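/- arXiv:1912.06058 — 5 statements merged into one kernel-verified Lean document; each statement's English description precedes it below -/
import Mathlib

section
/- Let m ∈ ℕ and let (x¹, S¹) and (x², S²) be two pairs where x¹, x² ∈ ℝ^m and S¹, S² are finite multisets of elements of ℝ^m, with (x¹, S¹) ≠ (x², S²) (i.e., x¹ ≠ x² or the multisets S¹ and S² differ). Then there exist a continuous function φ : ℝ^m → ℝ and a continuous function ψ : ℝ^m × ℝ → ℝ such that ψ(x¹, Σ_{y∈S¹} φ(y)) ≠ ψ(x², Σ_{y∈S²} φ(y)). -/
/-- Separability of the CLIP node-neighborhood aggregation: for any two distinct pairs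
`(x¹, S¹) ≠ (x², S²)` of a node attribute in `ℝ^m` and a finite multiset of neighbor
attributes, there are continuous `φ : ℝ^m → ℝ` and `ψ : ℝ^m × ℝ → ℝ` with
`ψ(x¹, Σ_{y∈S¹} φ(y)) ≠ ψ(x², Σ_{y∈S²} φ(y))`. -/
theorem stmt_8 (m : ℕ) (x₁ x₂ : EuclideanSpace ℝ (Fin m))
    (S₁ S₂ : Multiset (EuclideanSpace ℝ (Fin m)))
    (h : (x₁, S₁) ≠ (x₂, S₂)) :
    ∃ (φ : EuclideanSpace ℝ (Fin m) → ℝ) (ψ : EuclideanSpace ℝ (Fin m) × ℝ → ℝ),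
      Continuous φ ∧ Continuous ψ ∧
      ψ (x₁, (S₁.map φ).sum) ≠ ψ (x₂, (S₂.map φ).sum) := by
  classical
  by_cases hx : x₁ = x₂
  · have hS : S₁ ≠ S₂ := fun e => h (by rw [hx, e])
    obtain ⟨a, ha⟩ : ∃ a, S₁.count a ≠ S₂.count a := by
      by_contra hc
      push Not at hc
      exact hS (Multiset.ext.2 hc)
    let T : Set (EuclideanSpace ℝ (Fin m)) := ↑((S₁ + S₂).toFinset.erase a)
    have hT : IsClosed T := (Finset.finite_toSet _).isClosed
    have hd : Disjoint T {a} := by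
      rw [Set.disjoint_singleton_right]
      simp [T]
    obtain ⟨f, hf0, hf1, -⟩ := exists_continuous_zero_one_of_isClosed hT isClosed_singleton hd
    have key : ∀ S : Multiset (EuclideanSpace ℝ (Fin m)), S ≤ S₁ + S₂ →
        (S.map f).sum = (S.count a : ℝ) := by
      intro S
      induction S using Multiset.induction_on with
      | empty => simp
      | cons y S ih =>
        intro hle
        have hmem : y ∈ S₁ + S₂ := Multiset.mem_of_le hle (Multiset.mem_cons_self y S)
        rw [Multiset.map_cons, Multiset.sum_cons, ih ((Multiset.le_cons_self S y).trans hle)]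
        by_cases hy : y = a
        · subst hy
          have h1 : f y = 1 := hf1 rfl
          rw [h1, Multiset.count_cons_self]
          push_cast
          ring
        · have h0 : f y = 0 := hf0 (by
            simp only [T, Finset.mem_coe, Finset.mem_erase, Multiset.mem_toFinset]
            exact ⟨hy, hmem⟩)
          rw [h0, Multiset.count_cons_of_ne (Ne.symm hy), zero_add]
    refine ⟨f, Prod.snd, f.continuous, continuous_snd, ?_⟩
    simp only
    rw [key S₁ (Multiset.le_add_right _ _), key S₂ (Multiset.le_add_left _ _)]
    exact_mod_cast ha
  · refine ⟨fun _ => 0, fun p => dist p.1 x₁, continuous_const, by fun_prop, ?_⟩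
    simp only [dist_self]
    exact (dist_ne_zero.2 (Ne.symm hx)).symm
end

section
/- Let m, q, N ∈ ℕ. For each n ≤ N let F_n : ℝ^m × (ℝ^m)^n → ℝ^q be a continuous function that is invariant under permutations of its second argument (F_n(x, s∘σ) = F_n(x, s) for every permutation σ of {1,…,n}), and let K_n ⊆ ℝ^m × (ℝ^m)^n be compact. Then for every ε > 0 there exist p ∈ ℕ and continuous functions φ : ℝ^m → ℝ^p and ψ : ℝ^m × ℝ^p → ℝ^q such that for every n ≤ N and every (x, s) ∈ K_n, ‖F_n(x, s) − ψ(x, Σ_{j=1}^n φ(s_j))‖ ≤ ε. -/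
/-- Homogenized coordinates `(1, v)`. -/
def hcoord {m : ℕ} (v : EuclideanSpace ℝ (Fin m)) : Option (Fin m) → ℝ
  | none => 1
  | some k => v k

lemma hcoord_continuous {m : ℕ} (a : Option (Fin m)) :
    Continuous (fun v : EuclideanSpace ℝ (Fin m) => hcoord v a) := by
  cases a with
  | none => exact continuous_const
  | some k => simp only [hcoord]; fun_prop

/-- A product of affine forms, nonzero at `v` and zero at all `u i ≠ v`. -/
lemma exists_affine {m : ℕ} {ι : Type} [Fintype ι] (u : ι → EuclideanSpace ℝ (Fin m))
    (v : EuclideanSpace ℝ (Fin m)) :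
    ∃ c : ι → Option (Fin m) → ℝ,
      (∏ i, ∑ a, c i a * hcoord v a ≠ 0) ∧
      ∀ i, u i ≠ v → ∏ j, ∑ a, c j a * hcoord (u i) a = 0 := by
  have key : ∀ i, ∃ c : Option (Fin m) → ℝ, (∑ a, c a * hcoord v a ≠ 0) ∧
      (u i ≠ v → ∑ a, c a * hcoord (u i) a = 0) := by
    intro i
    by_cases h : u i = v
    · refine ⟨fun a => if a = none then 1 else 0, ?_, fun h' => absurd h h'⟩
      simp [hcoord]
    · have : ∃ k, u i k ≠ v k := by
        by_contra! hh
        exact h (by ext k; exact hh k)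
      obtain ⟨k, hk⟩ := this
      refine ⟨fun a => if a = none then - u i k else if a = some k then 1 else 0, ?_, fun _ => ?_⟩
      · simp only [Fintype.sum_option, hcoord]
        simp
        intro h0
        apply hk
        linarith
      · simp only [Fintype.sum_option, hcoord]
        simp
  choose c h1 h2 using key
  refine ⟨c, Finset.prod_ne_zero_iff.mpr fun i _ => h1 i, fun i hi => ?_⟩
  exact Finset.prod_eq_zero (Finset.mem_univ i) (h2 i hi)

lemma fiber_card {m N n n' : ℕ} (hn : n ≤ N) (hn' : n' ≤ N)
    (s : Fin n → EuclideanSpace ℝ (Fin m)) (t : Fin n' → EuclideanSpace ℝ (Fin m))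
    (h : ∀ α : Fin N ⊕ Fin N → Option (Fin m),
      ∑ j, ∏ i, hcoord (s j) (α i) = ∑ j, ∏ i, hcoord (t j) (α i))
    (v : EuclideanSpace ℝ (Fin m)) :
    Nonempty ({j // s j = v} ≃ {j // t j = v}) := by
  classical
  let u : Fin N ⊕ Fin N → EuclideanSpace ℝ (Fin m) :=
    Sum.elim (fun i => if h : i.1 < n then s ⟨i.1, h⟩ else v)
      (fun i => if h : i.1 < n' then t ⟨i.1, h⟩ else v)
  obtain ⟨c, hc, hc0⟩ := exists_affine u v
  have hs : ∀ j, s j ≠ v → ∏ i, ∑ a, c i a * hcoord (s j) a = 0 := by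
    intro j hj
    have e : u (Sum.inl ⟨j.1, lt_of_lt_of_le j.2 hn⟩) = s j := by simp [u]
    rw [← e] at hj ⊢
    exact hc0 _ hj
  have ht : ∀ j, t j ≠ v → ∏ i, ∑ a, c i a * hcoord (t j) a = 0 := by
    intro j hj
    have e : u (Sum.inr ⟨j.1, lt_of_lt_of_le j.2 hn'⟩) = t j := by simp [u]
    rw [← e] at hj ⊢
    exact hc0 _ hj
  have expand : ∀ w : EuclideanSpace ℝ (Fin m), ∏ i, ∑ a, c i a * hcoord w a =
      ∑ α : Fin N ⊕ Fin N → Option (Fin m), (∏ i, c i (α i)) * ∏ i, hcoord w (α i) := by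
    intro w
    rw [Finset.prod_univ_sum, Fintype.piFinset_univ]
    simp only [Finset.prod_mul_distrib]
  have hsum : ∑ j, ∏ i, ∑ a, c i a * hcoord (s j) a
      = ∑ j, ∏ i, ∑ a, c i a * hcoord (t j) a := by
    simp only [expand]
    rw [Finset.sum_comm, Finset.sum_comm (s := (Finset.univ : Finset (Fin n')))]
    simp only [← Finset.mul_sum, h]
  have count : ∀ (k : ℕ) (r : Fin k → EuclideanSpace ℝ (Fin m)),
      (∀ j, r j ≠ v → ∏ i, ∑ a, c i a * hcoord (r j) a = 0) →
      ∑ j, ∏ i, ∑ a, c i a * hcoord (r j) a =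
        (Fintype.card {j // r j = v} : ℝ) * ∏ i, ∑ a, c i a * hcoord v a := by
    intro k r hr
    rw [Fintype.card_subtype, ← nsmul_eq_mul, ← Finset.sum_const, Finset.sum_filter]
    refine Finset.sum_congr rfl fun j _ => ?_
    split_ifs with hj
    · rw [hj]
    · exact hr j hj
  rw [count n s hs, count n' t ht] at hsum
  have := mul_right_cancel₀ hc hsum
  exact ⟨Fintype.equivOfCardEq (by exact_mod_cast this)⟩

lemma exists_equiv {m N n n' : ℕ} (hn : n ≤ N) (hn' : n' ≤ N)
    (s : Fin n → EuclideanSpace ℝ (Fin m)) (t : Fin n' → EuclideanSpace ℝ (Fin m))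
    (h : ∀ α : Fin N ⊕ Fin N → Option (Fin m),
      ∑ j, ∏ i, hcoord (s j) (α i) = ∑ j, ∏ i, hcoord (t j) (α i)) :
    ∃ e : Fin n ≃ Fin n', t ∘ e = s := by
  let e := fun v => Classical.choice (fiber_card hn hn' s t h v)
  refine ⟨(Equiv.sigmaFiberEquiv s).symm.trans
    ((Equiv.sigmaCongrRight e).trans (Equiv.sigmaFiberEquiv t)), ?_⟩
  funext j
  exact (e (s j) ⟨j, rfl⟩).2

/-- Universality of the CLIP permutation-invariant node aggregation scheme: continuous
permutation-invariant functions `F n` of a node attribute and an `n`-tuple of neighbor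
attributes (for all sizes `n ≤ N`) can be uniformly approximated on compacts by a single
pair of continuous maps `(φ, ψ)` through `(x, s) ↦ ψ(x, Σ_j φ(s_j))`. -/
theorem stmt_9 (m q N : ℕ)
    (F : (n : ℕ) → EuclideanSpace ℝ (Fin m) × (Fin n → EuclideanSpace ℝ (Fin m)) →
      EuclideanSpace ℝ (Fin q))
    (hFcont : ∀ n ≤ N, Continuous (F n))
    (hFinv : ∀ n ≤ N, ∀ (x : EuclideanSpace ℝ (Fin m))
      (s : Fin n → EuclideanSpace ℝ (Fin m)) (σ : Equiv.Perm (Fin n)),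
      F n (x, s ∘ σ) = F n (x, s))
    (K : (n : ℕ) → Set (EuclideanSpace ℝ (Fin m) × (Fin n → EuclideanSpace ℝ (Fin m))))
    (hK : ∀ n ≤ N, IsCompact (K n)) :
    ∀ (ε : ℝ), 0 < ε →
      ∃ (p : ℕ) (φ : EuclideanSpace ℝ (Fin m) → EuclideanSpace ℝ (Fin p))
        (ψ : EuclideanSpace ℝ (Fin m) × EuclideanSpace ℝ (Fin p) → EuclideanSpace ℝ (Fin q)),
        Continuous φ ∧ Continuous ψ ∧
        ∀ n ≤ N, ∀ xs ∈ K n, ‖F n xs - ψ (xs.1, ∑ j : Fin n, φ (xs.2 j))‖ ≤ ε := by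
  intro ε hε
  classical
  let I := Fin N ⊕ Fin N → Option (Fin m)
  let eI : I ≃ Fin (Fintype.card I) := Fintype.equivFin I
  let φ : EuclideanSpace ℝ (Fin m) → EuclideanSpace ℝ (Fin (Fintype.card I)) :=
    fun v => WithLp.toLp 2 (fun k => ∏ i, hcoord v (eI.symm k i))
  have hφ : Continuous φ := by
    refine (PiLp.continuous_toLp 2 _).comp (continuous_pi fun k => ?_)
    exact continuous_finsetProd _ fun i _ => hcoord_continuous _
  let X := Σ n : Fin (N + 1), K n.1
  have hle : ∀ n : Fin (N + 1), n.1 ≤ N := fun n => Nat.lt_succ_iff.mp n.2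
  have : ∀ n : Fin (N + 1), CompactSpace (K n.1) :=
    fun n => isCompact_iff_compactSpace.mp (hK n.1 (hle n))
  let Φ : X → EuclideanSpace ℝ (Fin m) × EuclideanSpace ℝ (Fin (Fintype.card I)) :=
    fun x => (x.2.1.1, ∑ j, φ (x.2.1.2 j))
  have hΦ : Continuous Φ := by
    refine continuous_sigma fun n => ?_
    refine Continuous.prodMk (continuous_fst.comp continuous_subtype_val) ?_
    change Continuous fun a : K n.1 => ∑ j : Fin n.1, φ (a.1.2 j)
    refine continuous_finsetSum _ fun j _ => ?_
    exact hφ.comp ((continuous_apply j).comp (continuous_snd.comp continuous_subtype_val))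
  let G : C(X, EuclideanSpace ℝ (Fin q)) := ⟨fun x => F x.1.1 x.2.1, by
    refine continuous_sigma fun n => ?_
    exact (hFcont n.1 (hle n)).comp continuous_subtype_val⟩
  have hfac : ∀ x y : X, Φ x = Φ y → G x = G y := by
    rintro ⟨⟨n, hn⟩, ⟨⟨x, s⟩, hx⟩⟩ ⟨⟨n', hn'⟩, ⟨⟨y, t⟩, hy⟩⟩ hxy
    simp only [Φ, Prod.mk.injEq] at hxy
    obtain ⟨hxy1, hxy2⟩ := hxy
    subst hxy1
    obtain ⟨e, he⟩ := exists_equiv (Nat.lt_succ_iff.mp hn) (Nat.lt_succ_iff.mp hn') s t (by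
      intro α
      have := congrArg (fun z => z (eI α)) hxy2
      simpa [φ] using this)
    have hnn : n = n' := by simpa using Fintype.card_congr e
    subst hnn
    subst he
    exact hFinv n (Nat.lt_succ_iff.mp hn) x t e
  let Φ' : C(X, Set.range Φ) := ⟨Set.rangeFactorization Φ, hΦ.subtype_mk _⟩
  have hq : Topology.IsQuotientMap Φ' :=
    (Φ'.continuous.isClosedMap).isQuotientMap Φ'.continuous Set.rangeFactorization_surjective
  have hfac' : Function.FactorsThrough G Φ' := fun x y h => hfac x y (congrArg Subtype.val h)
  have hcl : IsClosed (Set.range Φ) := (isCompact_range hΦ).isClosed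
  have : TietzeExtension.{0, 0} (EuclideanSpace ℝ (Fin q)) :=
    TietzeExtension.of_homeo (EuclideanSpace.equiv (Fin q) ℝ).toHomeomorph
  obtain ⟨ψ, hψ⟩ := (hq.lift G hfac').exists_restrict_eq hcl
  refine ⟨Fintype.card I, φ, ψ, hφ, ψ.continuous, fun n hn xs hxs => ?_⟩
  let z : X := ⟨⟨n, Nat.lt_succ_iff.mpr hn⟩, ⟨xs, hxs⟩⟩
  have h1 : ψ (Φ z) = hq.lift G hfac' (Φ' z) := congrArg (fun f => f (Φ' z)) hψ
  have h2 : hq.lift G hfac' (Φ' z) = G z := congrArg (fun f => f z) (hq.lift_comp G hfac')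
  have h3 : ψ (xs.1, ∑ j : Fin n, φ (xs.2 j)) = F n xs := h1.trans h2
  rw [h3, sub_self, norm_zero]
  exact hε.le
end

section
/- Let n, m ∈ ℕ, let v, w : {1,…,n} → ℝ^m be injective maps (pairwise distinct node attributes), and let A, B be symmetric irreflexive relations on {1,…,n} (adjacency relations of simple graphs). Say that an index j ∈ {1,…,n} matches if there exists i ∈ {1,…,n} with w(j) = v(i) and, for every k ≠ i, A(i,k) holds if and only if v(k) belongs to the set { w(l) : B(j,l) } of attributes of the B-neighbors of j. Then every j ∈ {1,…,n} matches if and only if the two attributed graphs are isomorphic, i.e., there exists a permutation σ of {1,…,n} such that w(j) = v(σ(j)) for all j and B(j,l) ⟺ A(σ(j), σ(l)) for all j, l. -/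
/-- For attributed graphs `(v, A)` and `(w, B)` on `n` nodes with pairwise distinct node
attributes (injective `v`, `w`) and symmetric irreflexive adjacency relations: every
node `j` "matches" (there is `i` with `w j = v i` whose `A`-neighborhood matches the set
of attributes of the `B`-neighbors of `j`) if and only if the graphs are isomorphic. -/
theorem stmt_12 (n m : ℕ) (v w : Fin n → EuclideanSpace ℝ (Fin m))
    (hv : Function.Injective v) (hw : Function.Injective w)
    (A B : Fin n → Fin n → Prop)
    (hAsymm : ∀ i k, A i k → A k i) (hAirr : ∀ i, ¬ A i i)
    (hBsymm : ∀ j l, B j l → B l j) (hBirr : ∀ j, ¬ B j j) :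
    (∀ j : Fin n, ∃ i : Fin n, w j = v i ∧
        ∀ k : Fin n, k ≠ i → (A i k ↔ v k ∈ w '' {l | B j l})) ↔
      ∃ σ : Equiv.Perm (Fin n),
        (∀ j, w j = v (σ j)) ∧ ∀ j l, B j l ↔ A (σ j) (σ l) := by
  constructor
  · intro h
    choose f hf hA using h
    have finj : Function.Injective f := by
      intro a b hab
      apply hw
      rw [hf a, hf b, hab]
    refine ⟨Equiv.ofBijective f (Finite.injective_iff_bijective.mp finj), hf, ?_⟩
    intro j l
    change B j l ↔ A (f j) (f l)
    by_cases hjl : l = j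
    · subst hjl
      exact iff_of_false (hBirr _) (hAirr _)
    · rw [hA j (f l) (fun e => hjl (finj e)), ← hf l]
      exact (hw.mem_set_image (s := {l | B j l})).symm
  · rintro ⟨σ, h1, h2⟩ j
    refine ⟨σ j, h1 j, fun k _ => ?_⟩
    obtain ⟨l, rfl⟩ := σ.surjective k
    rw [← h2, ← h1]
    exact (hw.mem_set_image (s := {l | B j l})).symm
end

section
/- Let n, m ∈ ℕ, let v, w : {1,…,n} → ℝ^m be injective maps, and let A, B be symmetric irreflexive relations on {1,…,n}. Suppose the attributed graphs (v, A) and (w, B) are NOT isomorphic (no permutation σ of {1,…,n} satisfies w = v∘σ and B(j,l) ⟺ A(σ(j),σ(l)) for all j,l). Then the number of indices j ∈ {1,…,n} such that there exists i with w(j) = v(i) and, for every k ≠ i, A(i,k) ⟺ v(k) ∈ { w(l) : B(j,l) }, is at most n − 1. -/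
/-- If two attributed graphs `(v, A)` and `(w, B)` on `n` nodes with pairwise distinct
node attributes and symmetric irreflexive adjacency relations are NOT isomorphic, then
the number of "matching" nodes `j` (those admitting `i` with `w j = v i` whose
`A`-neighborhood matches the attributes of the `B`-neighbors of `j`) is at most `n − 1`. -/
theorem stmt_13 (n m : ℕ) (v w : Fin n → EuclideanSpace ℝ (Fin m))
    (hv : Function.Injective v) (hw : Function.Injective w)
    (A B : Fin n → Fin n → Prop)
    (hAsymm : ∀ i k, A i k → A k i) (hAirr : ∀ i, ¬ A i i)
    (hBsymm : ∀ j l, B j l → B l j) (hBirr : ∀ j, ¬ B j j)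
    (hniso : ¬ ∃ σ : Equiv.Perm (Fin n),
      (∀ j, w j = v (σ j)) ∧ ∀ j l, B j l ↔ A (σ j) (σ l)) :
    {j : Fin n | ∃ i : Fin n, w j = v i ∧
        ∀ k : Fin n, k ≠ i → (A i k ↔ v k ∈ w '' {l | B j l})}.ncard ≤ n - 1 := by
  set S := {j : Fin n | ∃ i : Fin n, w j = v i ∧
        ∀ k : Fin n, k ≠ i → (A i k ↔ v k ∈ w '' {l | B j l})} with hS
  have hne : S ≠ Set.univ := by
    intro hu
    have hall : ∀ j, ∃ i : Fin n, w j = v i ∧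
        ∀ k : Fin n, k ≠ i → (A i k ↔ v k ∈ w '' {l | B j l}) := by
      intro j
      have hj : j ∈ S := by rw [hu]; trivial
      exact hj
    choose f hf hfk using hall
    have hinj : Function.Injective f := by
      intro a b hab
      apply hw
      rw [hf a, hf b, hab]
    apply hniso
    refine ⟨Equiv.ofBijective f (Finite.injective_iff_bijective.mp hinj), hf, ?_⟩
    intro j l
    change B j l ↔ A (f j) (f l)
    by_cases hjl : l = j
    · subst hjl
      exact iff_of_false (hBirr _) (hAirr _)
    · rw [hfk j (f l) (fun h => hjl (hinj h)), ← hf l, hw.mem_set_image]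
      rfl
  have hlt : S.ncard < (Set.univ : Set (Fin n)).ncard :=
    Set.ncard_lt_ncard (Set.ssubset_univ_iff.mpr hne) Set.finite_univ
  rw [Set.ncard_univ, Nat.card_eq_fintype_card, Fintype.card_fin] at hlt
  omega
end

section
/- Fix d, q ∈ ℕ, v₀ ∈ ℝ^d, T ∈ ℕ, update functions f_t : ℝ^d × Multiset(ℝ^d) → ℝ^d for t = 0,…,T−1, and a readout function R : Multiset(ℝ^d) → ℝ^q. Let G¹ and G² be any two k-regular graphs on n nodes (symmetric irreflexive adjacency, every node with exactly k neighbors), with all node attributes equal to v₀. Run the MPNN on each graph: x_{i,0} = v₀ and x_{i,t+1} = f_t(x_{i,t}, {x_{j,t} : j neighbor of i}), and output R applied to the multiset of the n final representations {x_{i,T}}. Then the outputs on G¹ and G² are equal. In particular, MPNNs cannot separate non-isomorphic k-regular graphs of the same size with identical node attributes, and hence MPNNs are not a universal representation of the space of graphs with node attributes. -/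
/-- An MPNN (initialization to a common attribute `v₀`, `T` message-passing updates, and
a readout `R` of the multiset of final node representations) produces the same output on
any two `k`-regular graphs on `n` nodes: MPNNs cannot separate non-isomorphic `k`-regular
graphs of the same size with identical node attributes. -/
theorem stmt_15 (d q n k T : ℕ) (v₀ : EuclideanSpace ℝ (Fin d))
    (f : ℕ → EuclideanSpace ℝ (Fin d) × Multiset (EuclideanSpace ℝ (Fin d)) →
      EuclideanSpace ℝ (Fin d))
    (R : Multiset (EuclideanSpace ℝ (Fin d)) → EuclideanSpace ℝ (Fin q))
    (A₁ A₂ : Fin n → Fin n → Prop) [DecidableRel A₁] [DecidableRel A₂]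
    (h₁symm : ∀ i j, A₁ i j → A₁ j i) (h₁irr : ∀ i, ¬ A₁ i i)
    (h₁reg : ∀ i, (Finset.univ.filter fun j => A₁ i j).card = k)
    (h₂symm : ∀ i j, A₂ i j → A₂ j i) (h₂irr : ∀ i, ¬ A₂ i i)
    (h₂reg : ∀ i, (Finset.univ.filter fun j => A₂ i j).card = k)
    (x₁ x₂ : ℕ → Fin n → EuclideanSpace ℝ (Fin d))
    (hx₁0 : ∀ i, x₁ 0 i = v₀)
    (hx₁s : ∀ t < T, ∀ i, x₁ (t + 1) i =
      f t (x₁ t i, ((Finset.univ.filter fun j => A₁ i j).val).map (x₁ t)))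
    (hx₂0 : ∀ i, x₂ 0 i = v₀)
    (hx₂s : ∀ t < T, ∀ i, x₂ (t + 1) i =
      f t (x₂ t i, ((Finset.univ.filter fun j => A₂ i j).val).map (x₂ t))) :
    R (Finset.univ.val.map (x₁ T)) = R (Finset.univ.val.map (x₂ T)) := by
  have key : ∀ t, t ≤ T → ∃ c, x₁ t = (fun _ => c) ∧ x₂ t = (fun _ => c) := by
    intro t
    induction t with
    | zero => exact fun _ => ⟨v₀, funext hx₁0, funext hx₂0⟩
    | succ t ih =>
      intro ht
      obtain ⟨c, e₁, e₂⟩ := ih (by omega)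
      refine ⟨f t (c, Multiset.replicate k c), ?_, ?_⟩
      · funext i
        rw [hx₁s t (by omega) i, e₁, Multiset.map_const', Finset.card_val, h₁reg i]
      · funext i
        rw [hx₂s t (by omega) i, e₂, Multiset.map_const', Finset.card_val, h₂reg i]
  obtain ⟨c, e₁, e₂⟩ := key T le_rfl
  rw [e₁, e₂]
end
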